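/- Schnorr's martingale characterization of Martin-Löf randomness: A ∈ 2^ω is Martin-Löf random if and only if no c.e. martingale succeeds on A. -/

import Mathlib

open scoped ENNReal NNReal Classical

namespace AR

/-- Elements of Cantor space `2^ω`: infinite binary sequences. -/
abbrev Seq := ℕ → Bool

/-- Finite binary strings `2^{<ω}`. -/
abbrev Str := List Bool

/-- The first `n` bits of a sequence `A`, as a finite string (`A↾n`). -/
def pre (A : Seq) (n : ℕ) : Str := List.ofFn fun i : Fin n => A i

/-- The basic clopen cylinder `[σ]` of all sequences extending `σ`. -/
def cyl (σ : Str) : Set Seq := {A | pre A σ.length = σ}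

/-- A measure on Cantor space is *fair-coin* if every cylinder `[σ]` has measure
`2^{-|σ|}`; this uniquely characterizes the usual product measure `μ` on `2^ω`. -/
def FairCoin (μ : MeasureTheory.Measure Seq) : Prop :=
  ∀ σ : Str, μ (cyl σ) = (2 : ℝ≥0∞)⁻¹ ^ σ.length

/-- A machine is a partial computable function `2^{<ω} ⇀ 2^{<ω}`. -/
def IsMachine (M : Str →. Str) : Prop := Partrec M

/-- Kolmogorov complexity of `τ` relative to the machine `M`:
`C_M(τ) = min{|σ| : M(σ)↓ = τ}`, with value `∞` if no such `σ` exists. -/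
noncomputable def Cplx (M : Str →. Str) (τ : Str) : ℕ∞ :=
  sInf ((fun σ : Str => (σ.length : ℕ∞)) '' {σ | τ ∈ M σ})

/-- A universal machine: a machine simulating every machine up to an additive
constant.  `Cplx U` for universal `U` is plain Kolmogorov complexity `C`. -/
def UniversalMachine (U : Str →. Str) : Prop :=
  IsMachine U ∧ ∀ M : Str →. Str, IsMachine M → ∃ c : ℕ, ∀ τ, Cplx U τ ≤ Cplx M τ + c

/-- A set of strings is prefix-free if none of its elements is a proper initial
segment of another. -/
def PrefixFree (S : Set Str) : Prop :=
  ∀ σ ∈ S, ∀ τ ∈ S, σ <+: τ → σ = τ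

/-- A prefix-free machine: a machine whose domain is prefix-free. -/
def PrefixFreeMachine (M : Str →. Str) : Prop :=
  IsMachine M ∧ PrefixFree {σ | (M σ).Dom}

/-- A universal prefix-free machine.  `Cplx U` for such `U` is prefix-free
Kolmogorov complexity `K`. -/
def UniversalPFMachine (U : Str →. Str) : Prop :=
  PrefixFreeMachine U ∧
    ∀ M : Str →. Str, PrefixFreeMachine M → ∃ c : ℕ, ∀ τ, Cplx U τ ≤ Cplx M τ + c

/-- A c.e. (recursively enumerable) predicate. -/
def CEPred {α} [Primcodable α] (p : α → Prop) : Prop :=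
  Partrec fun a => Part.assert (p a) fun _ => Part.some ()

/-- A Martin-Löf test: a sequence of uniformly Σ⁰₁ classes `U i`, given by a single
c.e. set `W` of pairs, with `μ (U i) ≤ 2^{-i}`. -/
def MLTest (μ : MeasureTheory.Measure Seq) (U : ℕ → Set Seq) : Prop :=
  ∃ W : Set (ℕ × Str), CEPred (· ∈ W) ∧
    (∀ i, U i = ⋃ σ ∈ {σ : Str | (i, σ) ∈ W}, cyl σ) ∧
    ∀ i, μ (U i) ≤ (2 : ℝ≥0∞)⁻¹ ^ i

/-- `A` is Martin-Löf random if it passes every Martin-Löf test. -/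
def MLRandom (μ : MeasureTheory.Measure Seq) (A : Seq) : Prop :=
  ∀ U : ℕ → Set Seq, MLTest μ U → A ∉ ⋂ i, U i

/-- A martingale: a nonnegative function on strings satisfying the fairness
condition `d(σ) = (d(σ0) + d(σ1))/2`. -/
def IsMartingale (d : Str → ℝ≥0) : Prop :=
  ∀ σ : Str, d σ = (d (σ ++ [false]) + d (σ ++ [true])) / 2

/-- An `s`-gale: `d(σ) = 2^{-s} (d(σ0) + d(σ1))`. -/
def IsGale (s : ℝ) (d : Str → ℝ≥0) : Prop :=
  ∀ σ : Str, (d σ : ℝ) = (2 : ℝ) ^ (-s) * ((d (σ ++ [false]) : ℝ) + (d (σ ++ [true]) : ℝ))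

/-- `d` succeeds on `A` if `limsup_n d(A↾n) = ∞`. -/
def Succeeds (d : Str → ℝ≥0) (A : Seq) : Prop :=
  Filter.limsup (fun n => (d (pre A n) : ℝ≥0∞)) Filter.atTop = ⊤

/-- The success set `S[d]` of `d`. -/
def successSet (d : Str → ℝ≥0) : Set Seq := {A | Succeeds d A}

/-- The values of `d` are uniformly left-c.e. reals: there is a computable
`g : 2^{<ω} × ℕ → ℚ`, nondecreasing in the second argument, with
`sup_n g(σ, n) = d(σ)` (i.e. `g(σ, ·) → d(σ)`) for every `σ`.  A martingale
(or `s`-gale) with this property is a c.e. martingale (or c.e. `s`-gale). -/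
def CEValues (d : Str → ℝ≥0) : Prop :=
  ∃ g : Str × ℕ → ℚ, Computable g ∧ (∀ σ, Monotone fun n => g (σ, n)) ∧
    ∀ σ, Filter.Tendsto (fun n => (g (σ, n) : ℝ)) Filter.atTop (nhds (d σ))

/-- The code of a rational number coming from the pair of its numerator and denominator. -/
def ratCode (q : ℚ) : ℕ := Nat.pair (Encodable.encode q.num) q.den

lemma encode_int_natCast (n : ℕ) : Encodable.encode (n : ℤ) = 2 * n := rfl

lemma encode_int_negSucc (n : ℕ) : Encodable.encode (Int.negSucc n) = 2 * n + 1 := rfl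

lemma natAbs_eq_encode (z : ℤ) : z.natAbs = (Encodable.encode z + 1) / 2 := by
  rcases z with n | n
  · have := encode_int_natCast n
    simp only [Int.ofNat_eq_natCast, this, Int.natAbs_natCast]
    omega
  · rw [encode_int_negSucc, Int.natAbs_negSucc]
    omega

lemma nonneg_iff_encode (z : ℤ) : 0 ≤ z ↔ Encodable.encode z % 2 = 0 := by
  rcases z with n | n
  · have := encode_int_natCast n
    simp only [Int.ofNat_eq_natCast, this]
    omega
  · rw [encode_int_negSucc]
    simp only [Int.negSucc_not_nonneg, false_iff]
    omega

lemma exists_encode_int (c : ℕ) : ∃ z : ℤ, Encodable.encode z = c :=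
  ⟨Denumerable.ofNat ℤ c, Denumerable.encode_ofNat (α := ℤ) c⟩

lemma mem_range_ratCode (m : ℕ) : m ∈ Set.range ratCode ↔
    0 < m.unpair.2 ∧
      ∀ k < m.unpair.2 + 1, ((m.unpair.1 + 1) / 2) % k = 0 → m.unpair.2 % k = 0 → k = 1 := by
  constructor
  · rintro ⟨q, rfl⟩
    simp only [ratCode, Nat.unpair_pair]
    refine ⟨q.den_pos, fun k _ h1 h2 => ?_⟩
    rw [← natAbs_eq_encode] at h1
    have := Nat.dvd_gcd (Nat.dvd_of_mod_eq_zero h1) (Nat.dvd_of_mod_eq_zero h2)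
    rw [q.reduced] at this
    exact Nat.dvd_one.1 this
  · rintro ⟨h0, h⟩
    obtain ⟨z, hz⟩ := exists_encode_int m.unpair.1
    refine ⟨⟨z, m.unpair.2, h0.ne', ?_⟩, ?_⟩
    · refine h _ (Nat.lt_succ_of_le (Nat.gcd_le_right _ h0)) ?_ ?_
      · rw [← hz, ← natAbs_eq_encode]
        exact Nat.mod_eq_zero_of_dvd (Nat.gcd_dvd_left _ _)
      · exact Nat.mod_eq_zero_of_dvd (Nat.gcd_dvd_right _ _)
    · simp only [ratCode, hz, Nat.pair_unpair]

lemma primrecPred_mem_range_ratCode : PrimrecPred fun m => m ∈ Set.range ratCode := by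
  have hR : PrimrecRel fun (k : ℕ) (m : ℕ) =>
      ((m.unpair.1 + 1) / 2) % k = 0 → m.unpair.2 % k = 0 → k = 1 := by
    have ha : Primrec fun p : ℕ × ℕ => ((p.2.unpair.1 + 1) / 2) % p.1 :=
      Primrec.nat_mod.comp (Primrec.nat_div.comp
        (Primrec.succ.comp (Primrec.fst.comp (Primrec.unpair.comp Primrec.snd)))
        (Primrec.const 2)) Primrec.fst
    have hb : Primrec fun p : ℕ × ℕ => p.2.unpair.2 % p.1 :=
      Primrec.nat_mod.comp (Primrec.snd.comp (Primrec.unpair.comp Primrec.snd)) Primrec.fst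
    have h := ((Primrec.eq.comp ha (Primrec.const 0)).not.or
      ((Primrec.eq.comp hb (Primrec.const 0)).not.or
        (Primrec.eq.comp Primrec.fst (Primrec.const 1))))
    refine PrimrecPred.of_eq h fun p => ?_
    tauto
  have hd : Primrec fun m : ℕ => m.unpair.2 := Primrec.snd.comp Primrec.unpair
  refine PrimrecPred.of_eq ((Primrec.nat_lt.comp (Primrec.const 0) hd).and
    (hR.forall_lt.comp (Primrec.succ.comp hd) Primrec.id)) fun m => ?_
  rw [mem_range_ratCode]
  rfl

lemma infinite_range_ratCode : Infinite (Set.range ratCode) :=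
  Infinite.of_injective _ (Equiv.ofInjective _ (Encodable.encode_injective (α := ℚ))).injective

lemma ratCode_ofNat (n : ℕ) :
    let : DecidablePred (· ∈ Set.range ratCode) := Encodable.decidableRangeEncode ℚ
    letI := infinite_range_ratCode
    ratCode (Denumerable.ofNat ℚ n) = (Nat.Subtype.ofNat (Set.range ratCode) n : ℕ) :=
  congrArg Subtype.val ((Encodable.equivRangeEncode ℚ).apply_symm_apply _)

lemma ratCode_ofNat_succ (n : ℕ)
    (h : ∃ m, ratCode (Denumerable.ofNat ℚ n) + m + 1 ∈ Set.range ratCode) :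
    ratCode (Denumerable.ofNat ℚ (n + 1)) = ratCode (Denumerable.ofNat ℚ n) + Nat.find h + 1 := by
  let : DecidablePred (· ∈ Set.range ratCode) := Encodable.decidableRangeEncode ℚ
  let := infinite_range_ratCode
  have h1 : ratCode (Denumerable.ofNat ℚ (n + 1)) =
      (Nat.Subtype.succ (Nat.Subtype.ofNat (Set.range ratCode) n) : ℕ) := ratCode_ofNat (n + 1)
  simp only [Nat.Subtype.succ] at h1
  rw [h1]
  simp only [← ratCode_ofNat]
  congr!

lemma exists_succ_mem_range_ratCode (k : ℕ) : ∃ m, k + m + 1 ∈ Set.range ratCode := by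
  obtain ⟨m, hm, hlt⟩ := (Set.infinite_coe_iff.1 infinite_range_ratCode).exists_gt k
  exact ⟨m - k - 1, by rwa [show k + (m - k - 1) + 1 = m by omega]⟩

lemma computable_ratCode : Computable ratCode := by
  have hfind : Computable fun k => Nat.find (exists_succ_mem_range_ratCode k) := by
    apply Computable.find (P := fun k m => k + m + 1 ∈ Set.range ratCode)
    exact (primrecPred_mem_range_ratCode.comp
      (Primrec.succ.comp (Primrec.nat_add.comp Primrec.fst Primrec.snd))).computablePred
  have hrec : Computable fun n : ℕ => ratCode (Denumerable.ofNat ℚ n) := by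
    have hs : Computable₂ fun (_ : ℕ) (p : ℕ × ℕ) =>
        p.2 + Nat.find (exists_succ_mem_range_ratCode p.2) + 1 :=
      (Computable.succ.comp (Primrec.nat_add.to_comp.comp (Computable.snd.comp Computable.snd)
        (hfind.comp (Computable.snd.comp Computable.snd)))).to₂
    refine (Computable.nat_rec Computable.id
      (Computable.const (ratCode (Denumerable.ofNat ℚ 0))) hs).of_eq fun n => ?_
    induction n with
    | zero => rfl
    | succ n ih =>
      rw [ratCode_ofNat_succ n (exists_succ_mem_range_ratCode _)]
      simp only [id] at ih ⊢
      simp only [ih]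
  exact (hrec.comp Computable.encode).of_eq fun q => by rw [Denumerable.ofNat_encode]

lemma computable_rat_den : Computable fun q : ℚ => q.den :=
  ((Computable.snd.comp Computable.unpair).comp computable_ratCode).of_eq fun q => by
    simp [ratCode]

lemma computable_rat_encode_num : Computable fun q : ℚ => Encodable.encode q.num :=
  ((Computable.fst.comp Computable.unpair).comp computable_ratCode).of_eq fun q => by
    simp [ratCode]

lemma rat_gt_natCast_iff (q : ℚ) (n : ℕ) :
    (n : ℚ) < q ↔ Encodable.encode q.num % 2 = 0 ∧
      n * q.den < (Encodable.encode q.num + 1) / 2 := by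
  rw [← nonneg_iff_encode, ← natAbs_eq_encode]
  have hd : (0 : ℚ) < q.den := by exact_mod_cast q.den_pos
  have : (n : ℚ) < q ↔ (n * q.den : ℤ) < q.num := by
    rw [show ((n : ℚ) < q ↔ (n : ℚ) < q.num / q.den) by rw [Rat.num_div_den], lt_div_iff₀ hd]
    norm_cast
  rw [this]
  constructor
  · intro h
    have : (0 : ℤ) ≤ n * q.den := by positivity
    exact ⟨by omega, by zify; rw [abs_of_nonneg (by omega)]; exact h⟩
  · rintro ⟨h0, h⟩
    zify at h
    rwa [abs_of_nonneg h0] at h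

lemma rat_eq_div_iff (q : ℚ) (a b : ℕ) (hb : b ≠ 0) :
    q = (a : ℚ) / b ↔ Encodable.encode q.num % 2 = 0 ∧
      (Encodable.encode q.num + 1) / 2 * b = a * q.den := by
  rw [← nonneg_iff_encode, ← natAbs_eq_encode]
  have hd : (q.den : ℚ) ≠ 0 := by exact_mod_cast q.den_ne_zero
  have hb' : (b : ℚ) ≠ 0 := by exact_mod_cast hb
  have : q = (a : ℚ) / b ↔ q.num * b = (a * q.den : ℤ) := by
    rw [show (q = (a : ℚ) / b ↔ (q.num / q.den : ℚ) = (a : ℚ) / b) by rw [Rat.num_div_den],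
      div_eq_div_iff hd hb']
    norm_cast
  rw [this]
  constructor
  · intro h
    have h0 : 0 ≤ q.num := by
      have : (0 : ℤ) ≤ q.num * b := by rw [h]; positivity
      exact nonneg_of_mul_nonneg_left this (by positivity)
    exact ⟨h0, by zify; rwa [abs_of_nonneg h0]⟩
  · rintro ⟨h0, h⟩
    zify at h
    rwa [abs_of_nonneg h0] at h

lemma computable_natCast_lt_rat {α : Type*} [Primcodable α] {f : α → ℕ} {q : α → ℚ}
    (hf : Computable f) (hq : Computable q) : Computable fun a => decide ((f a : ℚ) < q a) := by
  have he := computable_rat_encode_num.comp hq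
  have h1 : Computable fun a => decide (Encodable.encode (q a).num % 2 = 0) :=
    Primrec.eq.decide.to_comp.comp (Primrec.nat_mod.to_comp.comp he (Computable.const 2))
      (Computable.const 0)
  have h2 : Computable fun a =>
      decide (f a * (q a).den < (Encodable.encode (q a).num + 1) / 2) :=
    Primrec.nat_lt.decide.to_comp.comp
      (Primrec.nat_mul.to_comp.comp hf (computable_rat_den.comp hq))
      (Primrec.nat_div.to_comp.comp (Computable.succ.comp he) (Computable.const 2))
  refine (Primrec.and.to_comp.comp h1 h2).of_eq fun a => ?_
  simp only [rat_gt_natCast_iff, Bool.decide_and]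

lemma computable_rat_eq_div {α : Type*} [Primcodable α] {f g : α → ℕ} {q : α → ℚ}
    (hf : Computable f) (hg : Computable g) (hg0 : ∀ a, g a ≠ 0) (hq : Computable q) :
    Computable fun a => decide (q a = (f a : ℚ) / g a) := by
  have he := computable_rat_encode_num.comp hq
  have h1 : Computable fun a => decide (Encodable.encode (q a).num % 2 = 0) :=
    Primrec.eq.decide.to_comp.comp (Primrec.nat_mod.to_comp.comp he (Computable.const 2))
      (Computable.const 0)
  have h2 : Computable fun a =>
      decide ((Encodable.encode (q a).num + 1) / 2 * g a = f a * (q a).den) :=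
    Primrec.eq.decide.to_comp.comp
      (Primrec.nat_mul.to_comp.comp
        (Primrec.nat_div.to_comp.comp (Computable.succ.comp he) (Computable.const 2)) hg)
      (Primrec.nat_mul.to_comp.comp hf (computable_rat_den.comp hq))
  refine (Primrec.and.to_comp.comp h1 h2).of_eq fun a => ?_
  simp only [rat_eq_div_iff _ _ _ (hg0 _), Bool.decide_and]

lemma computable_rat_div {α : Type*} [Primcodable α] {f g : α → ℕ}
    (hf : Computable f) (hg : Computable g) (hg0 : ∀ a, g a ≠ 0) :
    Computable fun a => (f a : ℚ) / g a := by
  have hex : ∀ a, ∃ n, Denumerable.ofNat ℚ n = (f a : ℚ) / g a := fun a =>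
    ⟨_, Denumerable.ofNat_encode _⟩
  have hc : ComputablePred fun p : α × ℕ => Denumerable.ofNat ℚ p.2 = (f p.1 : ℚ) / g p.1 :=
    (computable_rat_eq_div (hf.comp Computable.fst) (hg.comp Computable.fst) (fun p => hg0 p.1)
      ((Computable.ofNat ℚ).comp Computable.snd)).computablePred
  refine ((Computable.ofNat ℚ).comp (Computable.find
    (P := fun a n => Denumerable.ofNat ℚ n = (f a : ℚ) / g a) hc hex)).of_eq fun a => ?_
  exact Nat.find_spec (hex a)

@[simp]
lemma length_pre (A : Seq) (n : ℕ) : (pre A n).length = n := by simp [pre]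

lemma pre_succ (A : Seq) (n : ℕ) : pre A (n + 1) = pre A n ++ [A n] := by
  simp only [pre, List.ofFn_succ_last]
  rfl

lemma take_pre (A : Seq) {k n : ℕ} (h : k ≤ n) : (pre A n).take k = pre A k := by
  induction n, h using Nat.le_induction with
  | base => exact List.take_of_length_le (by simp)
  | succ n hn ih => rw [pre_succ, List.take_append_of_le_length (by simpa using hn), ih]

lemma mem_cyl_concat {A : Seq} {σ : Str} {b : Bool} :
    A ∈ cyl (σ ++ [b]) ↔ A ∈ cyl σ ∧ A σ.length = b := by
  simp only [cyl, Set.mem_ofPred_eq, List.length_append, List.length_singleton, pre_succ]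
  constructor
  · intro h
    have := List.append_inj h (by simp)
    simpa using this
  · rintro ⟨h1, h2⟩
    rw [h1, h2]

lemma mem_cyl_pre (A : Seq) (n : ℕ) : A ∈ cyl (pre A n) := by simp [cyl]

/-- The c.e. predicates are the projections of increasing primitive recursive relations. -/
lemma CEPred.exists_stages {α : Type*} [Primcodable α] {p : α → Prop} (hp : CEPred p) :
    ∃ V : α → ℕ → Bool, Primrec₂ V ∧ (∀ a s t, s ≤ t → V a s = true → V a t = true) ∧
      ∀ a, p a ↔ ∃ s, V a s = true := by
  obtain ⟨c, hc⟩ := Nat.Partrec.Code.exists_code.1 hp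
  refine ⟨fun a t => (Nat.Partrec.Code.evaln t c (Encodable.encode a)).isSome, ?_, ?_, ?_⟩
  · exact Primrec.option_isSome.comp (Nat.Partrec.Code.primrec_evaln.comp
      (Primrec.pair (Primrec.pair Primrec.snd (Primrec.const c))
        (Primrec.encode.comp Primrec.fst)))
  · intro a s t hst h
    obtain ⟨x, hx⟩ := Option.isSome_iff_exists.1 h
    exact Option.isSome_iff_exists.2 ⟨x, Nat.Partrec.Code.evaln_mono hst hx⟩
  · intro a
    have h : p a ↔ (Nat.Partrec.Code.eval c (Encodable.encode a)).Dom := by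
      rw [hc]
      simp [Part.assert]
    rw [h, Part.dom_iff_mem]
    simp only [Nat.Partrec.Code.evaln_complete, Option.isSome_iff_exists, Option.mem_def]
    exact exists_comm

lemma CEPred.of_computable {α : Type*} [Primcodable α] {p : α → ℕ → Bool}
    (hp : Computable₂ p) : CEPred fun a => ∃ n, p a n = true := by
  have h : Partrec fun a => Nat.rfind fun n => Part.some (p a n) := Partrec.rfind hp.partrec₂
  refine (h.map (g := fun _ _ => ()) (Computable.const ()).to₂).of_eq fun a => ?_
  refine Part.ext' ?_ fun _ _ => rfl
  change (Nat.rfind fun n => Part.some (p a n)).Dom ↔ ∃ _ : ∃ n, p a n = true, True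
  rw [exists_prop, and_true, Part.dom_iff_mem]
  constructor
  · rintro ⟨n, hn⟩
    exact ⟨n, (Part.mem_some_iff.1 (Nat.rfind_spec hn)).symm⟩
  · rintro ⟨n, hn⟩
    obtain ⟨m, hm, -⟩ := Nat.rfind_min' (p := p a) hn
    exact ⟨m, hm⟩

/-- Kolmogorov's inequality for martingales, up to a bounded number of further bits. -/
lemma IsMartingale.mul_measure_le {μ : MeasureTheory.Measure Seq} (hμ : FairCoin μ)
    {d : Str → ℝ≥0} (hd : IsMartingale d) (c : ℝ≥0) (N : ℕ) (σ : Str) :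
    c * μ {A | A ∈ cyl σ ∧ ∃ k ≤ N, c < d (pre A (σ.length + k))} ≤
      d σ * (2 : ℝ≥0∞)⁻¹ ^ σ.length := by
  have hbig : ∀ N σ, c < d σ →
      c * μ {A | A ∈ cyl σ ∧ ∃ k ≤ N, c < d (pre A (σ.length + k))} ≤
        d σ * (2 : ℝ≥0∞)⁻¹ ^ σ.length := by
    intro N σ h
    rw [← hμ σ]
    exact mul_le_mul' (by exact_mod_cast h.le) (MeasureTheory.measure_mono fun A hA => hA.1)
  induction N generalizing σ with
  | zero =>
    by_cases h : c < d σ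
    · exact hbig _ _ h
    · convert zero_le (a := (d σ : ℝ≥0∞) * (2 : ℝ≥0∞)⁻¹ ^ σ.length)
      convert mul_zero (c : ℝ≥0∞)
      convert MeasureTheory.measure_empty (μ := μ)
      refine Set.eq_empty_of_forall_notMem ?_
      rintro A ⟨hA, k, hk, h'⟩
      obtain rfl : k = 0 := by omega
      rw [add_zero, show pre A σ.length = σ from hA] at h'
      exact h h'
  | succ N ih =>
    by_cases h : c < d σ
    · exact hbig _ _ h
    have hsub : {A | A ∈ cyl σ ∧ ∃ k ≤ N + 1, c < d (pre A (σ.length + k))} ⊆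
        {A | A ∈ cyl (σ ++ [false]) ∧
          ∃ k ≤ N, c < d (pre A ((σ ++ [false]).length + k))} ∪
        {A | A ∈ cyl (σ ++ [true]) ∧
          ∃ k ≤ N, c < d (pre A ((σ ++ [true]).length + k))} := by
      rintro A ⟨hA, k, hk, h'⟩
      rcases k with _ | k
      · rw [add_zero, show pre A σ.length = σ from hA] at h'
        exact absurd h' h
      · have h'' : ∃ k ≤ N, c < d (pre A (σ.length + 1 + k)) :=
          ⟨k, by omega, by rwa [show σ.length + 1 + k = σ.length + (k + 1) by omega]⟩
        rcases hb : A σ.length with _ | _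
        · exact Or.inl ⟨mem_cyl_concat.2 ⟨hA, hb⟩, by simpa using h''⟩
        · exact Or.inr ⟨mem_cyl_concat.2 ⟨hA, hb⟩, by simpa using h''⟩
    refine (mul_le_mul_right ((MeasureTheory.measure_mono hsub).trans
      (MeasureTheory.measure_union_le _ _)) (c : ℝ≥0∞)).trans ?_
    rw [mul_add]
    refine (add_le_add (ih _) (ih _)).trans (le_of_eq ?_)
    rw [hd σ]
    simp only [List.length_append, List.length_singleton, pow_succ]
    rw [ENNReal.coe_div (by norm_num), ENNReal.coe_add, ENNReal.div_eq_inv_mul]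
    push_cast
    ring

lemma IsMartingale.measure_le {μ : MeasureTheory.Measure Seq} (hμ : FairCoin μ)
    {d : Str → ℝ≥0} (hd : IsMartingale d) (c : ℝ≥0) :
    c * μ {A | ∃ k, c < d (pre A k)} ≤ d [] := by
  have hmono : Monotone fun N : ℕ => {A : Seq | A ∈ cyl [] ∧
      ∃ k ≤ N, c < d (pre A (([] : Str).length + k))} := by
    rintro M N hMN A ⟨h, k, hk, h'⟩
    exact ⟨h, k, hk.trans hMN, h'⟩
  have heq : {A | ∃ k, c < d (pre A k)} = ⋃ N : ℕ, {A : Seq | A ∈ cyl [] ∧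
      ∃ k ≤ N, c < d (pre A (([] : Str).length + k))} := by
    ext A
    simp only [Set.mem_ofPred_eq, Set.mem_iUnion, List.length_nil, zero_add]
    constructor
    · rintro ⟨k, hk⟩
      exact ⟨k, by simp [cyl, pre], k, le_rfl, hk⟩
    · rintro ⟨N, -, k, -, hk⟩
      exact ⟨k, hk⟩
  rw [heq, hmono.measure_iUnion, ENNReal.mul_iSup]
  refine iSup_le fun N => ?_
  simpa using hd.mul_measure_le hμ c N []

lemma Succeeds.exists_lt {d : Str → ℝ≥0} {A : Seq} (h : Succeeds d A) (c : ℝ≥0) :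
    ∃ n, c < d (pre A n) := by
  by_contra! hle
  have : Filter.limsup (fun n => (d (pre A n) : ℝ≥0∞)) Filter.atTop ≤ c :=
    Filter.limsup_le_of_le (by isBoundedDefault)
      (Filter.Eventually.of_forall fun n => by exact_mod_cast hle n)
  rw [h] at this
  exact ENNReal.coe_ne_top (top_le_iff.1 this)

lemma not_MLRandom_of_succeeds {μ : MeasureTheory.Measure Seq} (hμ : FairCoin μ)
    {d : Str → ℝ≥0} (hd : IsMartingale d) (hce : CEValues d) {A : Seq} (hA : Succeeds d A) :
    ¬ MLRandom μ A := by
  obtain ⟨g, hg, hmono, hlim⟩ := hce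
  obtain ⟨C, hC⟩ := exists_nat_ge (d [] + 1)
  have hC0 : (C : ℝ≥0) ≠ 0 := (lt_of_lt_of_le (by positivity) hC).ne'
  have hmem : ∀ (i : ℕ) (σ : Str),
      (∃ n, decide (((C * 2 ^ i : ℕ) : ℚ) < g (σ, n)) = true) ↔ (C * 2 ^ i : ℝ≥0) < d σ := by
    intro i σ
    have hN : (C * 2 ^ i : ℝ≥0) < d σ ↔ ((C * 2 ^ i : ℕ) : ℝ) < d σ := by
      rw [← NNReal.coe_lt_coe]
      push_cast
      rfl
    simp only [decide_eq_true_eq, hN]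
    constructor
    · rintro ⟨n, hn⟩
      have hle : (g (σ, n) : ℝ) ≤ d σ :=
        Monotone.ge_of_tendsto (f := fun n => (g (σ, n) : ℝ))
          (fun a b hab => Rat.cast_le.2 (hmono σ hab)) (hlim σ) n
      exact lt_of_lt_of_le (by exact_mod_cast hn) hle
    · intro h
      obtain ⟨n, hn⟩ := ((hlim σ).eventually (lt_mem_nhds h)).exists
      exact ⟨n, by exact_mod_cast hn⟩
  have hU : ∀ i : ℕ, (⋃ σ ∈ {σ : Str | (i, σ) ∈
      {p : ℕ × Str | ∃ n, decide (((C * 2 ^ p.1 : ℕ) : ℚ) < g (p.2, n)) = true}}, cyl σ) =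
      {B : Seq | ∃ k, (C * 2 ^ i : ℝ≥0) < d (pre B k)} := by
    intro i
    ext B
    simp only [Set.mem_iUnion, Set.mem_ofPred_eq, exists_prop, hmem]
    constructor
    · rintro ⟨σ, hσ, hB⟩
      exact ⟨σ.length, by rwa [show pre B σ.length = σ from hB]⟩
    · rintro ⟨k, hk⟩
      exact ⟨_, hk, mem_cyl_pre B k⟩
  intro hrand
  refine hrand (fun i => {B : Seq | ∃ k, (C * 2 ^ i : ℝ≥0) < d (pre B k)})
    ⟨{p : ℕ × Str | ∃ n, decide (((C * 2 ^ p.1 : ℕ) : ℚ) < g (p.2, n)) = true},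
      ?_, fun i => (hU i).symm, fun i => ?_⟩ ?_
  · refine CEPred.of_computable (p := fun (p : ℕ × Str) n =>
      decide (((C * 2 ^ p.1 : ℕ) : ℚ) < g (p.2, n))) ?_
    have hpow : Primrec fun p : (ℕ × Str) × ℕ => C * 2 ^ p.1.1 :=
      Primrec.nat_mul.comp (Primrec.const C) ((Primrec₂.unpaired'.1 Nat.Primrec.pow).comp
        (Primrec.const 2) (Primrec.fst.comp Primrec.fst))
    exact computable_natCast_lt_rat hpow.to_comp
      (hg.comp (Computable.pair (Computable.snd.comp Computable.fst) Computable.snd))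
  · have h := hd.measure_le hμ (C * 2 ^ i : ℝ≥0)
    have hdC : (d [] : ℝ≥0∞) ≤ C := by
      have : d [] ≤ C := le_self_add.trans hC
      exact_mod_cast this
    have h2 := h.trans hdC
    push_cast at h2
    have hC' : (C : ℝ≥0∞) ≠ 0 := by exact_mod_cast hC0
    rw [mul_assoc] at h2
    have h3 := (ENNReal.mul_le_mul_iff_right hC' (ENNReal.natCast_ne_top C)).1
      (h2.trans_eq (mul_one _).symm)
    rw [← ENNReal.inv_pow]
    rw [mul_comm] at h3
    exact ENNReal.le_inv_iff_mul_le.2 h3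
  · exact Set.mem_iInter.2 fun i => hA.exists_lt _

/-- The list of all binary strings of length `s`. -/
def allStr : ℕ → List Str
  | 0 => [[]]
  | s + 1 => (allStr s).flatMap fun τ => [τ ++ [false], τ ++ [true]]

lemma primrec_allStr : Primrec allStr := by
  have hstep : Primrec₂ fun (_ : ℕ) (p : ℕ × List Str) =>
      p.2.flatMap fun τ => [τ ++ [false], τ ++ [true]] := by
    refine Primrec.list_flatMap (Primrec.snd.comp Primrec.snd) ?_
    have h : ∀ b : Bool, Primrec fun x : (ℕ × ℕ × List Str) × Str => x.2 ++ [b] := fun b =>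
      Primrec.list_concat.comp Primrec.snd (Primrec.const b)
    exact Primrec.list_cons.comp (h false) (Primrec.list_cons.comp (h true) (Primrec.const []))
  refine (Primrec.nat_rec' Primrec.id (Primrec.const [[]]) hstep).of_eq fun s => ?_
  induction s with
  | zero => rfl
  | succ s ih => simp only [id] at ih ⊢; rw [allStr, ← ih]

lemma mem_allStr {s : ℕ} {τ : Str} : τ ∈ allStr s ↔ τ.length = s := by
  induction s generalizing τ with
  | zero => simp [allStr]
  | succ s ih =>
    simp only [allStr, List.mem_flatMap, List.mem_cons, List.not_mem_nil, or_false, ih]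
    constructor
    · rintro ⟨ρ, hρ, rfl | rfl⟩ <;> simp [hρ]
    · intro h
      obtain rfl | ⟨ρ, b, rfl⟩ := List.eq_nil_or_concat τ
      · simp at h
      refine ⟨ρ, by simpa using h, ?_⟩
      cases b <;> simp

lemma sum_allStr_succ {M : Type*} [AddCommMonoid M] (f : Str → M) (s : ℕ) :
    ((allStr (s + 1)).map f).sum =
      ((allStr s).map fun τ => f (τ ++ [false]) + f (τ ++ [true])).sum := by
  rw [allStr]
  induction allStr s with
  | nil => rfl
  | cons τ l ih => simp_all [add_assoc]

/-- The number of strings of length `s` satisfying `p`. -/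
noncomputable def count (s : ℕ) (p : Str → Prop) : ℕ :=
  ((allStr s).map fun τ => if p τ then 1 else 0).sum

lemma count_mono {s : ℕ} {p q : Str → Prop} (h : ∀ τ, τ.length = s → p τ → q τ) :
    count s p ≤ count s q := by
  refine List.sum_le_sum fun τ hτ => ?_
  by_cases hp : p τ
  · simp [hp, h τ (mem_allStr.1 hτ) hp]
  · simp [hp]

lemma two_mul_count_le {s : ℕ} {p q : Str → Prop}
    (h : ∀ τ b, τ.length = s → p τ → q (τ ++ [b])) : 2 * count s p ≤ count (s + 1) q := by
  rw [count, count, sum_allStr_succ, ← List.sum_map_mul_left]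
  refine List.sum_le_sum fun τ hτ => ?_
  by_cases hp : p τ
  · simp [hp, h τ _ (mem_allStr.1 hτ) hp]
  · simp [hp]

lemma count_eq_add {s : ℕ} {p q r : Str → Prop} (h : ∀ τ, τ.length = s → (p τ ↔ q τ ∨ r τ))
    (hqr : ∀ τ, q τ → ¬ r τ) : count s p = count s q + count s r := by
  rw [count, count, count, ← List.sum_map_add]
  congr 1
  refine List.map_congr_left fun τ hτ => ?_
  have h1 := h τ (mem_allStr.1 hτ)
  have h2 := hqr τ
  by_cases hq : q τ <;> by_cases hr : r τ <;> simp_all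

lemma two_pow_le_count_take_eq (σ : Str) (n : ℕ) :
    2 ^ n ≤ count (σ.length + n) fun τ => τ.take σ.length = σ := by
  induction n with
  | zero =>
    refine List.le_sum_of_mem (List.mem_map.2 ⟨σ, mem_allStr.2 (by simp), ?_⟩)
    simp
  | succ n ih =>
    rw [pow_succ, mul_comm]
    refine (Nat.mul_le_mul_left 2 ih).trans (two_mul_count_le fun τ b hτ h => ?_)
    rwa [List.take_append_of_le_length (by omega)]

lemma measure_inter_cyl_concat (μ : MeasureTheory.Measure Seq) (S : Set Seq) (σ : Str) :
    μ (S ∩ cyl (σ ++ [false])) + μ (S ∩ cyl (σ ++ [true])) = μ (S ∩ cyl σ) := by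
  have hm : MeasurableSet {A : Seq | A σ.length = false} :=
    measurableSet_eq_fun (measurable_pi_apply σ.length) measurable_const
  rw [← MeasureTheory.measure_inter_add_sdiff (S ∩ cyl σ) hm]
  congr 2
  · ext A
    simp only [Set.mem_inter_iff, mem_cyl_concat, Set.mem_ofPred_eq, and_assoc]
  · ext A
    simp only [Set.mem_inter_iff, mem_cyl_concat, Set.mem_sdiff, Set.mem_ofPred_eq, and_assoc,
      Bool.not_eq_false]

lemma sum_measure_inter_cyl (μ : MeasureTheory.Measure Seq) (S : Set Seq) (s : ℕ) :
    ((allStr s).map fun τ => μ (S ∩ cyl τ)).sum = μ S := by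
  induction s with
  | zero => simp [allStr, cyl, pre]
  | succ s ih => simpa only [sum_allStr_succ, measure_inter_cyl_concat] using ih

lemma count_mul_le_measure {μ : MeasureTheory.Measure Seq} (hμ : FairCoin μ) {S : Set Seq}
    {s : ℕ} {p : Str → Prop} (h : ∀ τ, p τ → cyl τ ⊆ S) :
    count s p * (2 : ℝ≥0∞)⁻¹ ^ s ≤ μ S := by
  rw [← sum_measure_inter_cyl μ S s, count]
  have hcast : (((allStr s).map fun τ => if p τ then 1 else 0).sum : ℕ) * (2 : ℝ≥0∞)⁻¹ ^ s =
      ((allStr s).map fun τ => if p τ then (2 : ℝ≥0∞)⁻¹ ^ s else 0).sum := by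
    induction allStr s with
    | nil => simp
    | cons τ l ih =>
      simp only [List.map_cons, List.sum_cons, Nat.cast_add, add_mul, ih]
      split_ifs <;> simp
  rw [hcast]
  refine List.sum_le_sum fun τ hτ => ?_
  split_ifs with hp
  · rw [Set.inter_eq_self_of_subset_right (h τ hp), hμ, mem_allStr.1 hτ]
  · exact zero_le

/-- `τ` extends `σ` and lies in the stage `s` approximation of the `i`-th class given by `V`. -/
def Covered (V : ℕ × Str → ℕ → Bool) (σ : Str) (s i : ℕ) (τ : Str) : Prop :=
  τ.take σ.length = σ ∧ ∃ k < s + 1, V (i, τ.take k) s = true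

/-- The number of pairs `(i, τ)` with `i < s` and `τ` a string of length `s` covered by the
stage `s` approximation of the `i`-th class. -/
noncomputable def total (V : ℕ × Str → ℕ → Bool) (σ : Str) (s : ℕ) : ℕ :=
  ∑ i ∈ Finset.range s, count s (Covered V σ s i)

/-- The stage `s` approximation of the martingale associated with `V`. -/
noncomputable def approx (V : ℕ × Str → ℕ → Bool) (p : Str × ℕ) : ℚ :=
  ((2 ^ p.1.length * total V p.1 p.2 : ℕ) : ℚ) / (2 ^ p.2 : ℕ)

section

variable {V : ℕ × Str → ℕ → Bool}

lemma primrec_total (hV : Primrec₂ V) : Primrec fun p : Str × ℕ => total V p.1 p.2 := by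
  have hL : Primrec fun s => (List.range s).flatMap fun i => (allStr s).map (Prod.mk i) := by
    refine Primrec.list_flatMap Primrec.list_range ?_
    exact Primrec.list_map (primrec_allStr.comp Primrec.fst)
      (Primrec.pair (Primrec.snd.comp Primrec.fst) Primrec.snd)
  have hR : PrimrecRel fun (q : ℕ × Str) (p : Str × ℕ) => Covered V p.1 p.2 q.1 q.2 := by
    have hV' : PrimrecRel fun (k : ℕ) (y : (ℕ × Str) × Str × ℕ) =>
        V (y.1.1, y.1.2.take k) y.2.2 = true :=
      Primrec.eq.comp (hV.comp (Primrec.pair (Primrec.fst.comp (Primrec.fst.comp Primrec.snd))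
        (Primrec.list_take.comp Primrec.fst (Primrec.snd.comp (Primrec.fst.comp Primrec.snd))))
        (Primrec.snd.comp (Primrec.snd.comp Primrec.snd))) (Primrec.const true)
    have h1 : PrimrecPred fun y : (ℕ × Str) × Str × ℕ => y.1.2.take y.2.1.length = y.2.1 :=
      Primrec.eq.comp (Primrec.list_take.comp
        (Primrec.list_length.comp (Primrec.fst.comp Primrec.snd))
        (Primrec.snd.comp Primrec.fst)) (Primrec.fst.comp Primrec.snd)
    have h2 : PrimrecPred fun y : (ℕ × Str) × Str × ℕ =>
        ∃ k < y.2.2 + 1, V (y.1.1, y.1.2.take k) y.2.2 = true :=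
      (hV'.exists_mem_list.comp (Primrec.list_range.comp
        (Primrec.succ.comp (Primrec.snd.comp Primrec.snd))) Primrec.id).of_eq fun y => by simp
    exact h1.and h2
  refine (Primrec.list_length.comp
    (hR.listFilter.comp (hL.comp Primrec.snd) Primrec.id)).of_eq fun p => ?_
  have hcount : ∀ (l : List Str) (i : ℕ), ((l.map (Prod.mk i)).filter
      fun q => decide (Covered V p.1 p.2 q.1 q.2)).length =
      (l.map fun τ => if Covered V p.1 p.2 i τ then 1 else 0).sum := by
    intro l i
    induction l with
    | nil => rfl
    | cons τ l ih =>
      simp only [List.map_cons, List.sum_cons, List.filter_cons, ← ih, decide_eq_true_eq]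
      split_ifs <;> simp [add_comm]
  simp only [List.filter_flatMap, List.length_flatMap, hcount, id]
  rfl

lemma computable_approx (hV : Primrec₂ V) : Computable (approx V) := by
  have hpow : Primrec₂ ((· ^ ·) : ℕ → ℕ → ℕ) := Primrec₂.unpaired'.1 Nat.Primrec.pow
  exact computable_rat_div
    (Primrec.nat_mul.comp (hpow.comp (Primrec.const 2) (Primrec.list_length.comp Primrec.fst))
      (primrec_total hV)).to_comp
    (hpow.comp (Primrec.const 2) Primrec.snd).to_comp (fun _ => by positivity)

lemma two_mul_total_le (hmono : ∀ a s t, s ≤ t → V a s = true → V a t = true) (σ : Str)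
    (s : ℕ) : 2 * total V σ s ≤ total V σ (s + 1) := by
  rw [total, total, Finset.mul_sum, Finset.sum_range_succ]
  refine (Finset.sum_le_sum fun i _ => ?_).trans (Nat.le_add_right _ _)
  refine two_mul_count_le fun τ b hτ ⟨h, k, hk, hVk⟩ => ⟨?_, k, by omega, ?_⟩
  · have : σ.length ≤ τ.length := by
      have := congrArg List.length h
      rw [List.length_take] at this
      omega
    rwa [List.take_append_of_le_length this]
  · rw [List.take_append_of_le_length (by omega)]
    exact hmono _ _ _ (Nat.le_succ s) hVk

lemma monotone_approx (hmono : ∀ a s t, s ≤ t → V a s = true → V a t = true) (σ : Str) :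
    Monotone fun s => approx V (σ, s) := by
  refine monotone_nat_of_le_succ fun s => ?_
  have h : (2 * total V σ s : ℚ) ≤ total V σ (s + 1) := by
    exact_mod_cast two_mul_total_le hmono σ s
  simp only [approx]
  push_cast
  rw [div_le_div_iff₀ (by positivity) (by positivity), pow_succ]
  have : (0 : ℚ) ≤ 2 ^ σ.length * 2 ^ s := by positivity
  nlinarith [mul_le_mul_of_nonneg_left h this]

lemma total_eq_add (σ : Str) {s : ℕ} (hs : σ.length < s) :
    total V σ s = total V (σ ++ [false]) s + total V (σ ++ [true]) s := by
  have htake : ∀ (τ : Str) (b : Bool), τ.take (σ ++ [b]).length = σ ++ [b] ↔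
      τ.take σ.length = σ ∧ τ[σ.length]? = some b := by
    intro τ b
    rw [List.length_append, List.length_singleton, List.take_add_one]
    constructor
    · intro h
      have hlen := congrArg List.length h
      have hτ : σ.length < τ.length := by
        by_contra hle
        rw [List.getElem?_eq_none (by omega)] at hlen
        simp at hlen
        omega
      have := List.append_inj h (by simp; omega)
      refine ⟨this.1, ?_⟩
      rw [List.getElem?_eq_getElem hτ] at this ⊢
      simpa using this.2
    · rintro ⟨h1, h2⟩
      rw [h1, h2]
      rfl
  rw [total, total, total, ← Finset.sum_add_distrib]
  refine Finset.sum_congr rfl fun i _ => count_eq_add (fun τ hτ => ?_) fun τ h0 h1 => ?_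
  · simp only [Covered, htake]
    rw [List.getElem?_eq_getElem (show σ.length < τ.length by omega)]
    cases τ[σ.length]'(by omega) <;> simp
  · have h0 := ((htake τ _).1 h0.1).2
    rw [((htake τ _).1 h1.1).2] at h0
    simp at h0

lemma approx_eq (σ : Str) {s : ℕ} (hs : σ.length < s) :
    approx V (σ, s) = (approx V (σ ++ [false], s) + approx V (σ ++ [true], s)) / 2 := by
  simp only [approx, total_eq_add σ hs, List.length_append, List.length_singleton]
  push_cast
  ring

lemma approx_le {μ : MeasureTheory.Measure Seq} (hμ : FairCoin μ) {U : ℕ → Set Seq}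
    (hU : ∀ i, μ (U i) ≤ (2 : ℝ≥0∞)⁻¹ ^ i)
    (hVU : ∀ i σ s, V (i, σ) s = true → cyl σ ⊆ U i) (σ : Str) (s : ℕ) :
    (approx V (σ, s) : ℝ) ≤ 2 ^ σ.length * 2 := by
  have hcount : ∀ i, (count s (Covered V σ s i) : ℝ) / 2 ^ s ≤ (1 / 2) ^ i := by
    intro i
    have h : count s (Covered V σ s i) * (2 : ℝ≥0∞)⁻¹ ^ s ≤ (2 : ℝ≥0∞)⁻¹ ^ i := by
      refine (count_mul_le_measure hμ (S := U i) fun τ hτ => ?_).trans (hU i)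
      obtain ⟨-, k, -, hk⟩ := hτ
      refine Set.Subset.trans (fun A hA => ?_) (hVU i _ s hk)
      have hA : pre A τ.length = τ := hA
      rw [← hA]
      rcases le_total k τ.length with hkl | hkl
      · rw [take_pre A hkl]
        exact mem_cyl_pre A k
      · rw [List.take_of_length_le (by simpa using hkl)]
        exact mem_cyl_pre A _
    have h' := ENNReal.toReal_mono (by simp) h
    simpa [div_eq_mul_inv] using h'
  have hsum : (∑ i ∈ Finset.range s, (count s (Covered V σ s i) : ℝ) / 2 ^ s) ≤ 2 :=
    (Finset.sum_le_sum fun i _ => hcount i).trans (sum_geometric_two_le s)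
  rw [← Finset.sum_div] at hsum
  simp only [approx, total]
  push_cast
  rw [mul_div_assoc]
  gcongr

lemma le_approx {A : Seq} {M n s : ℕ} (hn : n ≤ s) (hM : M ≤ s)
    (hV : ∀ i < M, ∃ k ≤ n, V (i, pre A k) s = true) : (M : ℚ) ≤ approx V (pre A n, s) := by
  obtain ⟨m, rfl⟩ := Nat.exists_eq_add_of_le hn
  have hcount : ∀ i ∈ Finset.range M, 2 ^ m ≤ count (n + m) (Covered V (pre A n) (n + m) i) := by
    intro i hi
    have h := two_pow_le_count_take_eq (pre A n) m
    rw [length_pre] at h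
    refine h.trans (count_mono fun τ hτ hpre => ⟨by rwa [length_pre], ?_⟩)
    obtain ⟨k, hk, hVk⟩ := hV i (Finset.mem_range.1 hi)
    refine ⟨k, by omega, ?_⟩
    have : τ.take k = pre A k := by
      rw [← take_pre A hk, ← hpre, List.take_take, min_eq_left hk]
    rwa [this]
  have htotal : M * 2 ^ m ≤ total V (pre A n) (n + m) := by
    calc M * 2 ^ m = ∑ i ∈ Finset.range M, 2 ^ m := by simp
      _ ≤ ∑ i ∈ Finset.range M, count (n + m) (Covered V (pre A n) (n + m) i) :=
        Finset.sum_le_sum hcount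
      _ ≤ _ := Finset.sum_le_sum_of_subset (Finset.range_subset_range.2 hM)
  have htotal' : (M * 2 ^ m : ℚ) ≤ total V (pre A n) (n + m) := by exact_mod_cast htotal
  simp only [approx, length_pre]
  push_cast
  rw [le_div_iff₀ (by positivity), pow_add]
  calc (M : ℚ) * (2 ^ n * 2 ^ m) = 2 ^ n * (M * 2 ^ m) := by ring
    _ ≤ _ := by gcongr

end

lemma exists_ce_martingale_of_not_MLRandom {μ : MeasureTheory.Measure Seq} (hμ : FairCoin μ)
    {A : Seq} (hA : ¬ MLRandom μ A) :
    ∃ d : Str → ℝ≥0, IsMartingale d ∧ CEValues d ∧ Succeeds d A := by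
  simp only [MLRandom, not_forall, not_not] at hA
  obtain ⟨U, ⟨W, hW, hWU, hμU⟩, hAU⟩ := hA
  obtain ⟨V, hV, hmono, hVW⟩ := hW.exists_stages
  have hVU : ∀ i σ s, V (i, σ) s = true → cyl σ ⊆ U i := by
    intro i σ s h
    rw [hWU i]
    exact Set.subset_biUnion_of_mem (u := cyl) (show (i, σ) ∈ W from (hVW _).2 ⟨s, h⟩)
  have hmonoR : ∀ σ, Monotone fun s => (approx V (σ, s) : ℝ) := fun σ a b hab =>
    Rat.cast_le.2 (monotone_approx hmono σ hab)
  have hlim : ∀ σ, ∃ x : ℝ≥0,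
      Filter.Tendsto (fun s => (approx V (σ, s) : ℝ)) Filter.atTop (nhds x) := by
    intro σ
    have ht := tendsto_atTop_ciSup (hmonoR σ)
      ⟨2 ^ σ.length * 2, Set.forall_mem_range.2 fun s => approx_le hμ hμU hVU σ s⟩
    exact ⟨⟨_, ge_of_tendsto' ht fun s => by simp only [approx]; positivity⟩, ht⟩
  choose d hd using hlim
  refine ⟨d, fun σ => ?_, ⟨approx V, computable_approx hV, monotone_approx hmono, hd⟩, ?_⟩
  · rw [← NNReal.coe_inj]
    push_cast
    refine tendsto_nhds_unique (hd σ)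
      ((((hd (σ ++ [false])).add (hd (σ ++ [true]))).div_const 2).congr' ?_)
    filter_upwards [Filter.eventually_gt_atTop σ.length] with s hs
    rw [approx_eq σ hs]
    push_cast
    rfl
  · refine Filter.Tendsto.limsup_eq (ENNReal.tendsto_nhds_top fun M => ?_)
    have hex : ∀ i, ∃ k t, V (i, pre A k) t = true := by
      intro i
      have h := Set.mem_iInter.1 hAU i
      rw [hWU i] at h
      simp only [Set.mem_iUnion, Set.mem_ofPred_eq, exists_prop] at h
      obtain ⟨σ, hσ, hAσ⟩ := h
      obtain ⟨t, ht⟩ := (hVW _).1 hσ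
      exact ⟨σ.length, t, by rwa [show pre A σ.length = σ from hAσ]⟩
    choose k t hkt using hex
    filter_upwards [Filter.eventually_ge_atTop ((Finset.range (M + 1)).sup k)] with n hn
    set s := max (max n (M + 1)) ((Finset.range (M + 1)).sup t)
    have happ : ((M + 1 : ℕ) : ℚ) ≤ approx V (pre A n, s) := by
      refine le_approx (by omega) (by omega) fun i hi => ⟨k i, ?_, ?_⟩
      · exact (Finset.le_sup (Finset.mem_range.2 hi)).trans hn
      · exact hmono _ _ _ ((Finset.le_sup (f := t) (Finset.mem_range.2 hi)).trans
          (le_max_right _ _)) (hkt i)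
    have hle : (approx V (pre A n, s) : ℝ) ≤ d (pre A n) :=
      (hmonoR _).ge_of_tendsto (hd _) s
    have hMd : ((M + 1 : ℕ) : ℝ) ≤ d (pre A n) := le_trans (by exact_mod_cast happ) hle
    have hMd' : ((M + 1 : ℕ) : ℝ≥0) ≤ d (pre A n) := by exact_mod_cast hMd
    calc (M : ℝ≥0∞) < ((M + 1 : ℕ) : ℝ≥0∞) := by exact_mod_cast Nat.lt_succ_self M
      _ ≤ d (pre A n) := by exact_mod_cast hMd'

/-- **Schnorr's martingale characterization of Martin-Löf randomness**: `A` is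
Martin-Löf random if and only if no c.e. martingale succeeds on `A`. -/
theorem MLRandom_iff_no_ce_martingale (μ : MeasureTheory.Measure Seq)
    (hμ : FairCoin μ) (A : Seq) :
    MLRandom μ A ↔
      ¬ ∃ d : Str → ℝ≥0, IsMartingale d ∧ CEValues d ∧ Succeeds d A := by
  constructor
  · rintro hA ⟨d, hd, hce, hs⟩
    exact not_MLRandom_of_succeeds hμ hd hce hs hA
  · intro h
    by_contra hA
    exact h (exists_ce_martingale_of_not_MLRandom hμ hA)

end AR
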